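/- For every N ≥ 1 and θ > (1 + log N)/(2 log γ), we have limsup_{k→∞} (1/k) log ∑_{n=k+1}^∞ C(n,k) γ^{-2θn} ≤ −2θ log γ + 1/N, where γ = (1+√5)/2. Consequently lim_{θ→∞} |P_D(θ) + 2θ log γ| = 0 for the Diophantine pressure P_D. -/

import Mathlib

open Filter

/-- The continued fraction denominator `q_k([a_1, ..., a_k])` (the continuant). -/
def cfDen : List ℕ → ℕ
  | [] => 1
  | [a] => a
  | a :: b :: t => a * cfDen (b :: t) + cfDen t

/-- The Diophantine pressure (with `limsup`):
`P_D(θ) = lim_k (1/k) log ∑_{[a_1,...,a_k]} q_k([a_1,...,a_k])^{-2θ}`. -/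
noncomputable def diophantinePressure (θ : ℝ) : ℝ :=
  limsup (fun k : ℕ =>
    Real.log (∑' l : {l : List ℕ // l.length = k ∧ ∀ a ∈ l, 1 ≤ a},
      (cfDen l.1 : ℝ) ^ (-2 * θ)) / k) atTop

/-!
Write `φ = (1 + √5) / 2` and `x = φ ^ (-2θ)`. Since
`∑ n, C(n, k) x ^ n = x ^ k / (1 - x) ^ (k + 1)`, the growth rate of the binomial tail is
`log x - log (1 - x)`, and `-log (1 - x) ≤ x / (1 - x)`.

For the pressure, the recursion `q(a :: b :: l) = a q(b :: l) + q(l)` and `φ² = φ + 1` give by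
induction `∏ (1 + a_i / φ) ≤ q([a_1, ..., a_k]) + q([a_2, ..., a_k]) / φ ≤ φ q([a_1, ..., a_k])`.
Hence the sum over `[a_1, ..., a_k]` is at most `φ ^ (2θ) (∑ a, (1 + a / φ) ^ (-2θ)) ^ k`, whereas
the single word `[1, ..., 1]` already contributes at least `φ ^ (-2θk)`. The term `a = 1` is
`φ ^ (-2θ)` and dominates the sum over `a` as `θ → ∞`.
-/

open scoped Topology goldenRatio

section ExponentialGrowth

lemma tendsto_log_const_mul_pow_div {c r : ℝ} (hc : c ≠ 0) (hr : r ≠ 0) :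
    Tendsto (fun k : ℕ => Real.log (c * r ^ k) / k) atTop (𝓝 (Real.log r)) := by
  have h := (tendsto_const_div_atTop_nhds_zero_nat (Real.log c)).add_const (Real.log r)
  rw [zero_add] at h
  refine h.congr' ?_
  filter_upwards [eventually_ne_atTop 0] with k hk
  rw [Real.log_mul hc (pow_ne_zero k hr), Real.log_pow]
  field_simp

lemma limsup_log_div_mem_Icc {S : ℕ → ℝ} {c₁ c₂ r₁ r₂ : ℝ} (hc₁ : 0 < c₁) (hr₁ : 0 < r₁)
    (hlow : ∀ᶠ k in atTop, c₁ * r₁ ^ k ≤ S k) (hup : ∀ᶠ k in atTop, S k ≤ c₂ * r₂ ^ k) :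
    limsup (fun k : ℕ => Real.log (S k) / k) atTop ∈ Set.Icc (Real.log r₁) (Real.log r₂) := by
  have hS : ∀ᶠ k in atTop, 0 < S k := by
    filter_upwards [hlow] with k hk
    exact lt_of_lt_of_le (by positivity) hk
  obtain ⟨hc₂, hr₂⟩ : c₂ ≠ 0 ∧ r₂ ≠ 0 := by
    obtain ⟨k, ⟨hSk, hk⟩, hk₀⟩ := ((hS.and hup).and (eventually_ne_atTop 0)).exists
    exact (mul_ne_zero_iff.1 (hSk.trans_le hk).ne').imp_right (pow_ne_zero_iff hk₀).1
  have lim₁ := tendsto_log_const_mul_pow_div hc₁.ne' hr₁.ne'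
  have lim₂ := tendsto_log_const_mul_pow_div hc₂ hr₂
  have le₁ : ∀ᶠ k : ℕ in atTop, Real.log (c₁ * r₁ ^ k) / k ≤ Real.log (S k) / k := by
    filter_upwards [hlow] with k hk
    gcongr
  have le₂ : ∀ᶠ k : ℕ in atTop, Real.log (S k) / k ≤ Real.log (c₂ * r₂ ^ k) / k := by
    filter_upwards [hS, hup] with k hSk hk
    gcongr
  have bdd_below := lim₁.isBoundedUnder_ge.mono_ge le₁
  have bdd_above := lim₂.isBoundedUnder_le.mono_le le₂
  constructor
  · rw [← lim₁.limsup_eq]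
    exact limsup_le_limsup le₁ lim₁.isBoundedUnder_ge.isCoboundedUnder_le bdd_above
  · rw [← lim₂.limsup_eq]
    exact limsup_le_limsup le₂ bdd_below.isCoboundedUnder_le lim₂.isBoundedUnder_le

end ExponentialGrowth

section BinomialTail

lemma hasSum_choose_mul_pow_tail {𝕜 : Type*} [NormedField 𝕜] [HasSummableGeomSeries 𝕜] {x : 𝕜}
    (hx : ‖x‖ < 1) (k : ℕ) :
    HasSum (fun n : ℕ => ((n + k + 1).choose k : 𝕜) * x ^ (n + k + 1))
      (x ^ k * (1 / (1 - x) ^ (k + 1) - 1)) := by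
  have hsum := hasSum_choose_mul_geometric_of_norm_lt_one k hx
  have htail := (hasSum_nat_add_iff' 1).mpr hsum
  simp only [Finset.sum_range_one, zero_add, Nat.choose_self, Nat.cast_one, pow_zero,
    mul_one] at htail
  refine (htail.mul_left (x ^ k)).congr_fun fun n => ?_
  rw [add_right_comm n 1 k]
  ring

lemma limsup_log_tsum_choose_mul_pow_tail_div {x : ℝ} (hx₀ : 0 < x) (hx₁ : x < 1) :
    limsup (fun k : ℕ =>
        Real.log (∑' n : ℕ, ((n + k + 1).choose k : ℝ) * x ^ (n + k + 1)) / k) atTop =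
      Real.log (x / (1 - x)) := by
  have hy : 0 < 1 - x := sub_pos.2 hx₁
  have hnorm : ‖x‖ < 1 := by rwa [Real.norm_of_nonneg hx₀.le]
  simp only [(hasSum_choose_mul_pow_tail hnorm _).tsum_eq]
  have hc : 0 < 1 / (1 - x) - 1 := by rw [sub_pos, lt_div_iff₀ hy]; linarith
  have hpow (k : ℕ) :
      1 / (1 - x) * (x / (1 - x)) ^ k = x ^ k * (1 / (1 - x) ^ (k + 1)) := by
    rw [div_pow, pow_succ]
    field_simp
  have hlow (k : ℕ) :
      (1 / (1 - x) - 1) * (x / (1 - x)) ^ k ≤ x ^ k * (1 / (1 - x) ^ (k + 1) - 1) := by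
    have : x ^ k ≤ (x / (1 - x)) ^ k := by
      gcongr
      exact le_div_self hx₀.le hy (by linarith)
    rw [sub_mul, mul_sub, hpow]
    linarith
  have hup (k : ℕ) :
      x ^ k * (1 / (1 - x) ^ (k + 1) - 1) ≤ 1 / (1 - x) * (x / (1 - x)) ^ k := by
    rw [hpow]
    gcongr
    linarith
  have h := limsup_log_div_mem_Icc hc (by positivity) (.of_forall hlow) (.of_forall hup)
  rwa [Set.Icc_self] at h

lemma log_div_one_sub_le {x t : ℝ} (hx : 0 < x) (ht : 0 < t) (h : x * (t + 1) ≤ 1) :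
    Real.log (x / (1 - x)) ≤ Real.log x + 1 / t := by
  have hy : 0 < 1 - x := by nlinarith
  have hlog : 1 - (1 - x)⁻¹ ≤ Real.log (1 - x) := Real.one_sub_inv_le_log_of_pos hy
  have hinv : (1 - x)⁻¹ ≤ 1 + 1 / t := by
    rw [inv_le_iff_one_le_mul₀ hy]
    field_simp
    linarith
  rw [Real.log_div hx.ne' hy.ne']
  linarith

lemma rpow_mul_add_one_le_one {g t θ : ℝ} (hg : 1 < g) (ht : 1 ≤ t)
    (hθ : (1 + Real.log t) / (2 * Real.log g) < θ) : g ^ (-2 * θ) * (t + 1) ≤ 1 := by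
  have hlog : 0 < Real.log g := Real.log_pos hg
  rw [div_lt_iff₀ (by positivity)] at hθ
  have he : t + 1 ≤ Real.exp (1 + Real.log t) := by
    rw [Real.exp_add, Real.exp_log (by linarith)]
    nlinarith [Real.add_one_le_exp (1 : ℝ)]
  calc g ^ (-2 * θ) * (t + 1)
      ≤ Real.exp (Real.log g * (-2 * θ)) * Real.exp (1 + Real.log t) := by
        rw [Real.rpow_def_of_pos (by linarith)]
        gcongr
    _ = Real.exp (1 + Real.log t - θ * (2 * Real.log g)) := by
        rw [← Real.exp_add]
        ring_nf
    _ ≤ 1 := Real.exp_le_one_iff.2 (by linarith)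

theorem limsup_log_tsum_choose_mul_rpow_tail_div_le {g t θ : ℝ} (hg : 1 < g) (ht : 1 ≤ t)
    (hθ : (1 + Real.log t) / (2 * Real.log g) < θ) :
    limsup (fun k : ℕ => Real.log (∑' n : ℕ,
        ((n + k + 1).choose k : ℝ) * g ^ (-2 * θ * ((n : ℝ) + k + 1))) / k) atTop ≤
      -2 * θ * Real.log g + 1 / t := by
  have hg₀ : 0 < g := by linarith
  have hx₀ : 0 < g ^ (-2 * θ) := Real.rpow_pos_of_pos hg₀ _
  have hx := rpow_mul_add_one_le_one hg ht hθ
  have hpow (n k : ℕ) : g ^ (-2 * θ * ((n : ℝ) + k + 1)) = (g ^ (-2 * θ)) ^ (n + k + 1) := by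
    rw [← Real.rpow_mul_natCast hg₀.le]
    push_cast
    rfl
  simp only [hpow]
  rw [limsup_log_tsum_choose_mul_pow_tail_div hx₀ (by nlinarith), ← Real.log_rpow hg₀]
  exact log_div_one_sub_le hx₀ (by linarith) hx

end BinomialTail

section DominantTerm

variable {ι : Type*} {f : ι → ℝ} {i₀ : ι} {t₀ : ℝ}

lemma tendsto_tsum_rpow_atBot (h₁ : f i₀ = 1) (hf : ∀ i ≠ i₀, 1 < f i)
    (hsum : Summable fun i => f i ^ t₀) :
    Tendsto (fun t : ℝ => ∑' i, f i ^ t) atBot (𝓝 1) := by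
  classical
  have one_le (i : ι) : 1 ≤ f i := by
    rcases eq_or_ne i i₀ with rfl | hi
    exacts [h₁.ge, (hf i hi).le]
  have hlim (i : ι) : Tendsto (fun t : ℝ => f i ^ t) atBot (𝓝 (if i = i₀ then 1 else 0)) := by
    split_ifs with hi
    · simp [hi, h₁]
    · exact tendsto_rpow_atBot_of_base_gt_one _ (hf i hi)
  have hdom : ∀ᶠ t : ℝ in atBot, ∀ i, ‖f i ^ t‖ ≤ f i ^ t₀ := by
    filter_upwards [eventually_le_atBot t₀] with t ht i
    rw [Real.norm_of_nonneg (Real.rpow_nonneg (zero_le_one.trans (one_le i)) t)]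
    exact Real.rpow_le_rpow_of_exponent_le (one_le i) ht
  simpa only [tsum_ite_eq] using tendsto_tsum_of_dominated_convergence hsum hlim hdom

lemma tendsto_log_tsum_rpow_sub_atBot (h₀ : 0 < f i₀) (hf : ∀ i ≠ i₀, f i₀ < f i)
    (hsum : Summable fun i => f i ^ t₀) :
    Tendsto (fun t : ℝ => Real.log (∑' i, f i ^ t) - t * Real.log (f i₀)) atBot (𝓝 0) := by
  have hnonneg (i : ι) : 0 ≤ f i := by
    rcases eq_or_ne i i₀ with rfl | hi
    exacts [h₀.le, (h₀.trans (hf i hi)).le]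
  have hdiv (t : ℝ) (i : ι) : (f i / f i₀) ^ t = f i ^ t / f i₀ ^ t :=
    Real.div_rpow (hnonneg i) h₀.le t
  have hlim : Tendsto (fun t : ℝ => ∑' i, (f i / f i₀) ^ t) atBot (𝓝 1) :=
    tendsto_tsum_rpow_atBot (div_self h₀.ne') (fun i hi => (one_lt_div h₀).2 (hf i hi))
      (by simpa only [hdiv] using hsum.div_const (f i₀ ^ t₀))
  have hlog := hlim.log one_ne_zero
  rw [Real.log_one] at hlog
  refine hlog.congr' ?_
  filter_upwards [hlim.eventually_ne one_ne_zero] with t ht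
  simp only [hdiv, tsum_div_const] at ht ⊢
  rw [Real.log_div (div_ne_zero_iff.1 ht).1 (div_ne_zero_iff.1 ht).2, Real.log_rpow h₀]

end DominantTerm

section Words

variable {α : Type*} {p : α → Prop}

/-- Words of length `k` in the letters satisfying `p`, encoded as lists so that
`Word (1 ≤ ·) k` is the index type of the sum in `diophantinePressure`. -/
abbrev Word (p : α → Prop) (k : ℕ) : Type _ :=
  {l : List α // l.length = k ∧ ∀ a ∈ l, p a}

/-- The decomposition of a nonempty word into its first letter and the remaining word, used to sum
over words by induction on their length. -/
def Word.consEquiv (p : α → Prop) (k : ℕ) : {a // p a} × Word p k ≃ Word p (k + 1) where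
  toFun w := ⟨w.1.1 :: w.2.1, by simp [w.2.2.1], List.forall_mem_cons.2 ⟨w.1.2, w.2.2.2⟩⟩
  invFun
    | ⟨a :: l, h⟩ => (⟨a, h.2 a List.mem_cons_self⟩,
        ⟨l, Nat.succ.inj h.1, fun b hb => h.2 b (List.mem_cons_of_mem a hb)⟩)
  left_inv _ := rfl
  right_inv
    | ⟨_ :: _, _⟩ => rfl

lemma Word.hasSum_prod_map {f : α → ℝ} (hf : ∀ a, p a → 0 ≤ f a) {s : ℝ}
    (hs : HasSum (fun a : {a // p a} => f a) s) (k : ℕ) :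
    HasSum (fun l : Word p k => (l.1.map f).prod) (s ^ k) := by
  induction k with
  | zero =>
    let nil : Word p 0 := ⟨[], rfl, List.forall_mem_nil p⟩
    have eq_nil (l : Word p 0) : l = nil := Subtype.ext (List.length_eq_zero_iff.1 l.2.1)
    simpa [nil] using hasSum_single (f := fun l : Word p 0 => (l.1.map f).prod) nil
      fun l hl => absurd (eq_nil l) hl
  | succ k ih =>
    have prod_nonneg (l : Word p k) : 0 ≤ (l.1.map f).prod :=
      List.prod_nonneg (List.forall_mem_map.2 fun a ha => hf a (l.2.2 a ha))
    have hsum := hs.summable.mul_of_nonneg ih.summable (fun a => hf a a.2) prod_nonneg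
    rw [← (Word.consEquiv p k).hasSum_iff, pow_succ']
    exact (hs.mul ih hsum).congr_fun fun w => List.prod_cons

end Words

section Continuants

lemma cfDen_le_cfDen_cons {a : ℕ} (ha : 1 ≤ a) (l : List ℕ) : cfDen l ≤ cfDen (a :: l) := by
  cases l with
  | nil => exact ha
  | cons b l => exact (Nat.le_mul_of_pos_left _ ha).trans (Nat.le_add_right _ _)

lemma cfDen_replicate_one (k : ℕ) : cfDen (List.replicate k 1) = Nat.fib (k + 1) := by
  induction k using Nat.twoStepInduction with
  | zero => rfl
  | one => rfl
  | more k ih ih' =>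
    rw [Nat.fib_add_two, ← ih, ← ih', Nat.add_comm (cfDen _)]
    simp only [List.replicate_succ, cfDen, one_mul]

lemma fib_succ_le_goldenRatio_pow (k : ℕ) : (Nat.fib (k + 1) : ℝ) ≤ φ ^ k := by
  have h := Real.fib_succ_sub_goldenConj_mul_fib k
  have : ψ * Nat.fib k ≤ 0 := mul_nonpos_of_nonpos_of_nonneg Real.goldenConj_neg.le (by positivity)
  linarith

lemma one_add_one_div_goldenRatio : 1 + 1 / φ = φ := by
  rw [one_div, Real.inv_goldenRatio, ← sub_eq_add_neg, Real.one_sub_goldenRatio]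

lemma one_add_div_goldenRatio_mul_le {a p r : ℝ} (ha : 1 ≤ a) (hrp : r ≤ p) :
    (1 + a / φ) * (p + r / φ) ≤ a * p + r + p / φ := by
  have hdiff : a * p + r + p / φ - (1 + a / φ) * (p + r / φ) = (a - 1) * (p - r) / φ ^ 2 := by
    have := Real.goldenRatio_sq
    field_simp
    grind
  have : 0 ≤ (a - 1) * (p - r) / φ ^ 2 :=
    div_nonneg (mul_nonneg (sub_nonneg.2 ha) (sub_nonneg.2 hrp)) (sq_nonneg φ)
  linarith

lemma prod_one_add_div_goldenRatio_le_add {a : ℕ} {l : List ℕ} (h : ∀ b ∈ a :: l, 1 ≤ b) :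
    ((a :: l).map fun b : ℕ => 1 + (b : ℝ) / φ).prod ≤ cfDen (a :: l) + cfDen l / φ := by
  induction l generalizing a with
  | nil =>
    have ha : (1 : ℝ) ≤ a := by exact_mod_cast h a List.mem_cons_self
    simpa [cfDen] using one_add_div_goldenRatio_mul_le ha zero_le_one
  | cons b l ih =>
    obtain ⟨ha, hl⟩ := List.forall_mem_cons.1 h
    have hle : (cfDen l : ℝ) ≤ cfDen (b :: l) :=
      Nat.cast_le.2 (cfDen_le_cfDen_cons (hl b List.mem_cons_self) l)
    calc ((a :: b :: l).map fun b : ℕ => 1 + (b : ℝ) / φ).prod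
        = (1 + a / φ) * ((b :: l).map fun b : ℕ => 1 + (b : ℝ) / φ).prod := by
          rw [List.map_cons, List.prod_cons]
      _ ≤ (1 + a / φ) * (cfDen (b :: l) + cfDen l / φ) := by gcongr; exact ih hl
      _ ≤ a * cfDen (b :: l) + cfDen l + cfDen (b :: l) / φ :=
          one_add_div_goldenRatio_mul_le (by exact_mod_cast ha) hle
      _ = cfDen (a :: b :: l) + cfDen (b :: l) / φ := by
          rw [cfDen]
          push_cast
          rfl

lemma prod_one_add_div_goldenRatio_le {l : List ℕ} (hl : ∀ a ∈ l, 1 ≤ a) :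
    (l.map fun a : ℕ => 1 + (a : ℝ) / φ).prod ≤ φ * cfDen l := by
  cases l with
  | nil => simpa [cfDen] using Real.one_lt_goldenRatio.le
  | cons a l =>
    have hle : (cfDen l : ℝ) ≤ cfDen (a :: l) :=
      Nat.cast_le.2 (cfDen_le_cfDen_cons (hl a List.mem_cons_self) l)
    calc ((a :: l).map fun a : ℕ => 1 + (a : ℝ) / φ).prod
        ≤ cfDen (a :: l) + cfDen l / φ := prod_one_add_div_goldenRatio_le_add hl
      _ ≤ cfDen (a :: l) + cfDen (a :: l) / φ := by gcongr
      _ = (1 + 1 / φ) * cfDen (a :: l) := by ring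
      _ = φ * cfDen (a :: l) := by rw [one_add_one_div_goldenRatio]

lemma cfDen_rpow_le {l : List ℕ} (hl : ∀ a ∈ l, 1 ≤ a) {t : ℝ} (ht : t ≤ 0) :
    (cfDen l : ℝ) ^ t ≤ φ⁻¹ ^ t * (l.map fun a : ℕ => (1 + (a : ℝ) / φ) ^ t).prod := by
  have hpos : 0 < (l.map fun a : ℕ => 1 + (a : ℝ) / φ).prod :=
    List.prod_pos (List.forall_mem_map.2 fun a _ => by positivity)
  have hle : φ⁻¹ * (l.map fun a : ℕ => 1 + (a : ℝ) / φ).prod ≤ cfDen l :=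
    (inv_mul_le_iff₀ Real.goldenRatio_pos).2 (prod_one_add_div_goldenRatio_le hl)
  rw [Real.list_prod_map_rpow' l _ (fun a _ => by positivity),
    ← Real.mul_rpow (by positivity) hpos.le]
  exact Real.rpow_le_rpow_of_nonpos (by positivity) hle ht

end Continuants

section Pressure

variable {t : ℝ}

lemma summable_one_add_div_goldenRatio_rpow (ht : t < -1) :
    Summable fun a : {a : ℕ // 1 ≤ a} => (1 + (a : ℝ) / φ) ^ t := by
  have hsum : Summable fun a : {a : ℕ // 1 ≤ a} => (a : ℝ) ^ t / φ ^ t :=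
    ((Real.summable_nat_rpow.2 ht).subtype _).div_const _
  refine hsum.of_nonneg_of_le (fun a => by positivity) fun a => ?_
  have ha : (0 : ℝ) < a := Nat.cast_pos.2 a.2
  rw [← Real.div_rpow ha.le (by positivity)]
  exact Real.rpow_le_rpow_of_nonpos (by positivity) (by linarith) (by linarith)

lemma hasSum_prod_one_add_div_goldenRatio_rpow (ht : t < -1) (k : ℕ) :
    HasSum (fun l : Word (1 ≤ ·) k => (l.1.map fun a : ℕ => (1 + (a : ℝ) / φ) ^ t).prod)
      ((∑' a : {a : ℕ // 1 ≤ a}, (1 + (a : ℝ) / φ) ^ t) ^ k) :=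
  Word.hasSum_prod_map (fun a _ => by positivity)
    (summable_one_add_div_goldenRatio_rpow ht).hasSum k

lemma summable_cfDen_rpow (ht : t < -1) (k : ℕ) :
    Summable fun l : Word (1 ≤ ·) k => (cfDen l.1 : ℝ) ^ t :=
  ((hasSum_prod_one_add_div_goldenRatio_rpow ht k).summable.mul_left (φ⁻¹ ^ t)).of_nonneg_of_le
    (fun l => by positivity) (fun l => cfDen_rpow_le l.2.2 (by linarith))

lemma tsum_cfDen_rpow_le (ht : t < -1) (k : ℕ) :
    ∑' l : Word (1 ≤ ·) k, (cfDen l.1 : ℝ) ^ t ≤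
      φ⁻¹ ^ t * (∑' a : {a : ℕ // 1 ≤ a}, (1 + (a : ℝ) / φ) ^ t) ^ k :=
  hasSum_le (fun l => cfDen_rpow_le l.2.2 (by linarith)) (summable_cfDen_rpow ht k).hasSum
    ((hasSum_prod_one_add_div_goldenRatio_rpow ht k).mul_left _)

lemma goldenRatio_rpow_pow_le_tsum_cfDen_rpow (ht : t < -1) (k : ℕ) :
    (φ ^ t) ^ k ≤ ∑' l : Word (1 ≤ ·) k, (cfDen l.1 : ℝ) ^ t := by
  let ones : Word (1 ≤ ·) k :=
    ⟨List.replicate k 1, List.length_replicate, fun a ha => (List.eq_of_mem_replicate ha).ge⟩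
  have hpos : (0 : ℝ) < Nat.fib (k + 1) := Nat.cast_pos.2 (Nat.fib_pos.2 k.succ_pos)
  calc (φ ^ t) ^ k = (φ ^ k) ^ t := Real.rpow_pow_comm Real.goldenRatio_pos.le t k
    _ ≤ (Nat.fib (k + 1) : ℝ) ^ t :=
        Real.rpow_le_rpow_of_nonpos hpos (fib_succ_le_goldenRatio_pow k) (by linarith)
    _ = (cfDen ones.1 : ℝ) ^ t := by rw [cfDen_replicate_one]
    _ ≤ ∑' l : Word (1 ≤ ·) k, (cfDen l.1 : ℝ) ^ t :=
        (summable_cfDen_rpow ht k).le_tsum ones fun l _ => by positivity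

theorem diophantinePressure_mem_Icc {θ : ℝ} (hθ : 1 / 2 < θ) :
    diophantinePressure θ ∈ Set.Icc (-2 * θ * Real.log φ)
      (Real.log (∑' a : {a : ℕ // 1 ≤ a}, (1 + (a : ℝ) / φ) ^ (-2 * θ))) := by
  have ht : -2 * θ < -1 := by linarith
  rw [← Real.log_rpow Real.goldenRatio_pos]
  exact limsup_log_div_mem_Icc one_pos (by positivity)
    (.of_forall fun k => by simpa using goldenRatio_rpow_pow_le_tsum_cfDen_rpow ht k)
    (.of_forall (tsum_cfDen_rpow_le ht))

lemma tendsto_log_tsum_one_add_div_goldenRatio_rpow_sub :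
    Tendsto (fun t : ℝ => Real.log (∑' a : {a : ℕ // 1 ≤ a}, (1 + (a : ℝ) / φ) ^ t) -
      t * Real.log φ) atBot (𝓝 0) := by
  let f (a : {a : ℕ // 1 ≤ a}) : ℝ := 1 + (a : ℝ) / φ
  have hf₁ : f ⟨1, le_rfl⟩ = φ := by
    simpa only [f, Nat.cast_one] using one_add_one_div_goldenRatio
  have hlt : ∀ a ≠ ⟨1, le_rfl⟩, f ⟨1, le_rfl⟩ < f a := by
    intro a ha
    have : 1 < a.1 := lt_of_le_of_ne a.2 fun h => ha (Subtype.ext h.symm)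
    simp only [f]
    gcongr
  have hsum := summable_one_add_div_goldenRatio_rpow (t := -2) (by norm_num)
  simpa only [hf₁] using
    tendsto_log_tsum_rpow_sub_atBot (hf₁ ▸ Real.goldenRatio_pos) hlt hsum

theorem tendsto_abs_diophantinePressure_add :
    Tendsto (fun θ : ℝ => |diophantinePressure θ + 2 * θ * Real.log φ|) atTop (𝓝 0) := by
  have hlim := tendsto_log_tsum_one_add_div_goldenRatio_rpow_sub.comp
    (tendsto_id.const_mul_atTop_of_neg (by norm_num : (-2 : ℝ) < 0))
  refine squeeze_zero' (.of_forall fun θ => abs_nonneg _) ?_ hlim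
  filter_upwards [eventually_gt_atTop (1 / 2)] with θ hθ
  obtain ⟨hlow, hup⟩ := diophantinePressure_mem_Icc hθ
  rw [abs_of_nonneg (by linarith)]
  simp only [Function.comp_apply, id_eq]
  linarith

end Pressure

/-- For `N ≥ 1` and `θ > (1 + log N)/(2 log γ)`,
`limsup_k (1/k) log ∑_{n=k+1}^∞ C(n,k) γ^{-2θn} ≤ -2θ log γ + 1/N`; consequently
`lim_{θ→∞} |P_D(θ) + 2θ log γ| = 0`. -/
theorem diophantine_pressure_asymptotics :
    (∀ N : ℕ, 1 ≤ N → ∀ θ : ℝ,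
      (1 + Real.log N) / (2 * Real.log ((1 + Real.sqrt 5) / 2)) < θ →
      limsup (fun k : ℕ =>
          Real.log (∑' n : ℕ, (((n + k + 1).choose k : ℝ)) *
            ((1 + Real.sqrt 5) / 2) ^ (-2 * θ * ((n : ℝ) + k + 1))) / k) atTop ≤
        -2 * θ * Real.log ((1 + Real.sqrt 5) / 2) + 1 / N) ∧
    Tendsto (fun θ : ℝ =>
        |diophantinePressure θ + 2 * θ * Real.log ((1 + Real.sqrt 5) / 2)|)
      atTop (nhds 0) := by
  exact ⟨fun N hN θ hθ => limsup_log_tsum_choose_mul_rpow_tail_div_le Real.one_lt_goldenRatio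
    (Nat.one_le_cast.2 hN) hθ, tendsto_abs_diophantinePressure_add⟩
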